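/- For every real number q with 0 < q < 1, ∫_0^q ∏_{j=1}^∞ (1−t^{2j})^8 (1−t^{4j})^4 / (1−t^j)^8 dt = q ∏_{j=1}^∞ (1−q^{2j})^2 (1−q^{8j})^4 / ((1−q^j)^4 (1−q^{4j})^2). Moreover this common value equals 1/√32 when q = e^{−π/√2}. -/

import Mathlib

open Real

/-- The integrand `∏_{j=1}^∞ (1−t^{2j})^8 (1−t^{4j})^4 / (1−t^j)^8`. -/
noncomputable def U4 (t : ℝ) : ℝ :=
  ∏' j : ℕ, (1 - t ^ (2 * (j + 1))) ^ 8 * (1 - t ^ (4 * (j + 1))) ^ 4 / (1 - t ^ (j + 1)) ^ 8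

/-- The antiderivative `q ∏_{j=1}^∞ (1−q^{2j})^2 (1−q^{8j})^4 / ((1−q^j)^4 (1−q^{4j})^2)`. -/
noncomputable def V4 (q : ℝ) : ℝ :=
  q * ∏' j : ℕ, (1 - q ^ (2 * (j + 1))) ^ 2 * (1 - q ^ (8 * (j + 1))) ^ 4 /
    ((1 - q ^ (j + 1)) ^ 4 * (1 - q ^ (4 * (j + 1))) ^ 2)

/-! Write `θ(z, q) = ∑ z^n q^{n²}` and `E(x) = ∏ (1 - x^k)`. By the Jacobi triple product the
values `θ(±1, q)` and `θ(q⁻¹, q)` are quotients of `E(q), E(q²), E(q⁴)`, and since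
`θ(1, q)² - θ(-1, q)² = 2 q θ(q⁻², q²)²`, the right-hand side is `V4 = ((θ(1)/θ(-1))² - 1) / 8`.
Its derivative is `θ(1) W / (4 θ(-1)³)`, where `W` is the Wronskian of `θ(1, ·)` and `θ(-1, ·)`.
As a double series over `(a, b)`, the factor `a² - b²` of `q W` and the sign of its terms leave only
odd `a + b`; rotating the lattice by `a = m + n - 1`, `b = m - n` makes
`a² - b² = (2m - 1)(2n - 1)`, so the series factors into the square of Jacobi's
`∑ (2n - 1) (-1)^n q^{2(n² - n)} = -2 E(q⁴)³`. Hence `W = 4 E(q⁴)⁶`, and the derivative is the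
integrand.

For the special value, Poisson summation relates `θ(-1, e^{-πa})` to `θ(e^{π/a}, e^{-π/a})`, and at
`a = 1/√2` the dual nome `e^{-π/a}` is the square of `e^{-πa}`.
-/

open Filter Topology

section QBinomial

variable {R : Type*} [CommRing R]

/-- The finite q-Pochhammer symbol `(x; x)_N = ∏_{k=1}^N (1 - x^k)`. -/
def qPochhammer (x : R) (N : ℕ) : R := ∏ k ∈ Finset.range N, (1 - x ^ (k + 1))

/-- The Gaussian binomial coefficient `[M choose k]_x`, defined by its Pascal recurrence so that it
makes sense in every commutative ring. -/
def qBinom (x : R) : ℕ → ℕ → R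
  | _, 0 => 1
  | 0, _ + 1 => 0
  | M + 1, k + 1 => qBinom x M k + x ^ (k + 1) * qBinom x M (k + 1)

lemma qPochhammer_zero (x : R) : qPochhammer x 0 = 1 := Finset.prod_range_zero _

lemma qPochhammer_succ (x : R) (N : ℕ) :
    qPochhammer x (N + 1) = qPochhammer x N * (1 - x ^ (N + 1)) :=
  Finset.prod_range_succ _ _

lemma qBinom_zero_right (x : R) (M : ℕ) : qBinom x M 0 = 1 := by cases M <;> rfl

lemma qBinom_succ_succ (x : R) (M k : ℕ) :
    qBinom x (M + 1) (k + 1) = qBinom x M k + x ^ (k + 1) * qBinom x M (k + 1) := rfl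

lemma qBinom_eq_zero_of_lt (x : R) : ∀ {M k : ℕ}, M < k → qBinom x M k = 0
  | 0, _ + 1, _ => rfl
  | M + 1, k + 1, h => by
    rw [qBinom_succ_succ, qBinom_eq_zero_of_lt x (Nat.lt_of_succ_lt_succ h),
      qBinom_eq_zero_of_lt x (Nat.lt_of_succ_lt h), mul_zero, add_zero]

lemma qBinom_self (x : R) : ∀ M : ℕ, qBinom x M M = 1
  | 0 => rfl
  | M + 1 => by
    rw [qBinom_succ_succ, qBinom_self x M, qBinom_eq_zero_of_lt x M.lt_succ_self, mul_zero,
      add_zero]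

lemma qBinom_mul_qPochhammer_mul_qPochhammer (x : R) : ∀ a b : ℕ,
    qBinom x (a + b) a * qPochhammer x a * qPochhammer x b = qPochhammer x (a + b)
  | 0, b => by simp [qBinom_zero_right, qPochhammer_zero]
  | a + 1, 0 => by simp [qBinom_self, qPochhammer_zero]
  | a + 1, b + 1 => by
    have left := qBinom_mul_qPochhammer_mul_qPochhammer x a (b + 1)
    have right := qBinom_mul_qPochhammer_mul_qPochhammer x (a + 1) b
    rw [← add_assoc, qPochhammer_succ x b] at left
    rw [add_right_comm, qPochhammer_succ x a] at right
    rw [show a + 1 + (b + 1) = a + b + 1 + 1 by ring, qBinom_succ_succ, qPochhammer_succ x a,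
      qPochhammer_succ x b, qPochhammer_succ x (a + b + 1)]
    linear_combination (1 - x ^ (a + 1)) * left + x ^ (a + 1) * (1 - x ^ (b + 1)) * right

lemma prod_one_add_mul_pow_eq_sum_qBinom (x z : R) (M : ℕ) :
    ∏ k ∈ Finset.range M, (1 + z * x ^ k) =
      ∑ k ∈ Finset.range (M + 1), x ^ k.choose 2 * z ^ k * qBinom x M k := by
  induction M generalizing z with
  | zero => simp [qBinom_zero_right]
  | succ M ih =>
    set term : ℕ → R := fun k ↦ x ^ k.choose 2 * (z * x) ^ k * qBinom x M k with hterm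
    have pascal (k : ℕ) : x ^ (k + 1).choose 2 * z ^ (k + 1) * qBinom x (M + 1) (k + 1) =
        z * term k + term (k + 1) := by
      simp only [hterm, qBinom_succ_succ, Nat.choose_succ_succ' k 1, Nat.choose_one_right]
      ring
    have shift : ∑ k ∈ Finset.range (M + 1), term (k + 1) + 1 =
        ∑ k ∈ Finset.range (M + 1), term k := by
      have h := Finset.sum_range_succ' term (M + 1)
      rw [Finset.sum_range_succ] at h
      simpa [hterm, qBinom_zero_right, qBinom_eq_zero_of_lt] using h.symm
    calc ∏ k ∈ Finset.range (M + 1), (1 + z * x ^ k)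
        = (∏ k ∈ Finset.range M, (1 + z * x * x ^ k)) * (1 + z) := by
          simp only [Finset.prod_range_succ', pow_succ', pow_zero, mul_one, mul_assoc]
      _ = z * ∑ k ∈ Finset.range (M + 1), term k +
            (∑ k ∈ Finset.range (M + 1), term (k + 1) + 1) := by
          rw [ih, shift]; ring
      _ = ∑ k ∈ Finset.range (M + 1 + 1), x ^ k.choose 2 * z ^ k * qBinom x (M + 1) k := by
          rw [Finset.sum_range_succ' _ (M + 1), Finset.mul_sum, ← add_assoc,
            ← Finset.sum_add_distrib]
          simp [pascal, qBinom_zero_right]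

/-- The coefficient `[2N choose N + n]_x` of the finite triple product, extended by zero to all
integers `n`. -/
def centralQBinom (x : R) (N : ℕ) (n : ℤ) : R :=
  if n.natAbs ≤ N then qBinom x (2 * N) (N + n).toNat else 0

lemma tsum_centralQBinom_mul [TopologicalSpace R] (x : R) (N : ℕ) (f : ℤ → R) :
    ∑' n, centralQBinom x N n * f n =
      ∑ k ∈ Finset.range (2 * N + 1), qBinom x (2 * N) k * f (k - N) := by
  have hinj : Function.Injective fun k : ℕ ↦ (k : ℤ) - N := fun a b h ↦ by simpa using h
  rw [tsum_eq_sum (s := (Finset.range (2 * N + 1)).image fun k : ℕ ↦ (k : ℤ) - N),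
    Finset.sum_image hinj.injOn]
  · refine Finset.sum_congr rfl fun k hk ↦ ?_
    rw [Finset.mem_range] at hk
    rw [centralQBinom, if_pos (by omega), add_sub_cancel, Int.toNat_natCast]
  · intro n hn
    rw [centralQBinom, if_neg, zero_mul]
    refine fun h ↦ hn (Finset.mem_image.2 ⟨(n + N).toNat, ?_, ?_⟩)
    · rw [Finset.mem_range]; omega
    · omega

end QBinomial

section FiniteTripleProduct

variable {K : Type*} [Field K]

lemma prod_range_div_pow_odd (z q : K) (N : ℕ) :
    ∏ k ∈ Finset.range N, z / q ^ (2 * k + 1) = z ^ N / q ^ N ^ 2 := by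
  induction N with
  | zero => simp
  | succ N ih => rw [Finset.prod_range_succ, ih, div_mul_div_comm, ← pow_succ, ← pow_add]; ring_nf

lemma sq_pow_choose_two_mul_pow {M : Type*} [Monoid M] (q : M) (k : ℕ) :
    (q ^ 2) ^ k.choose 2 * q ^ k = q ^ k ^ 2 := by
  have exponent : 2 * k.choose 2 + k = k ^ 2 := by
    rw [Nat.choose_two_right, Nat.mul_div_cancel' (Nat.even_mul_pred_self k).two_dvd, sq]
    cases k <;> grind
  rw [← pow_mul, ← pow_add, exponent]

lemma prod_one_add_div_pow_odd {q z : K} (hq : q ≠ 0) (hz : z ≠ 0) (N : ℕ) :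
    ∏ k ∈ Finset.range N, (1 + z / q ^ (2 * k + 1)) =
      z ^ N / q ^ N ^ 2 * ∏ k ∈ Finset.range N, (1 + z⁻¹ * q ^ (2 * k + 1)) := by
  rw [← prod_range_div_pow_odd, ← Finset.prod_mul_distrib]
  refine Finset.prod_congr rfl fun k _ ↦ ?_
  field_simp
  ring

lemma zpow_sq_sub {q : K} (hq : q ≠ 0) (k N : ℕ) :
    q ^ ((k : ℤ) - N) ^ 2 = q ^ k ^ 2 * q ^ N ^ 2 / q ^ (2 * N * k) := by
  rw [eq_div_iff (by positivity)]
  simp only [← zpow_natCast, ← zpow_add₀ hq]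
  congr 1
  push_cast
  ring

/-- The substitution `z ↦ z q^{1 - 2N}` centres the `2N` factors of the q-binomial theorem. -/
lemma finite_triple_product_range {q z : K} (hq : q ≠ 0) (hz : z ≠ 0) (N : ℕ) :
    (∏ k ∈ Finset.range N, (1 + z * q ^ (2 * k + 1))) *
        ∏ k ∈ Finset.range N, (1 + z⁻¹ * q ^ (2 * k + 1)) =
      ∑ k ∈ Finset.range (2 * N + 1), qBinom (q ^ 2) (2 * N) k *
        (z ^ ((k : ℤ) - N) * q ^ ((k : ℤ) - N) ^ 2) := by
  set w := z * q / q ^ (2 * N) with hw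
  have lower_factor (k : ℕ) (hk : k ∈ Finset.range N) :
      1 + w * (q ^ 2) ^ (N - 1 - k) = 1 + z / q ^ (2 * k + 1) := by
    obtain ⟨d, rfl⟩ := Nat.exists_eq_add_of_lt (Finset.mem_range.1 hk)
    rw [hw, show k + d + 1 - 1 - k = d by omega]
    field_simp
    ring
  have upper_factor (k : ℕ) : 1 + w * (q ^ 2) ^ (N + k) = 1 + z * q ^ (2 * k + 1) := by
    rw [hw]
    field_simp
    ring
  have binomial := prod_one_add_mul_pow_eq_sum_qBinom (q ^ 2) w (2 * N)
  rw [two_mul, Finset.prod_range_add, ← Finset.prod_range_reflect,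
    Finset.prod_congr rfl lower_factor, prod_one_add_div_pow_odd hq hz, ← two_mul] at binomial
  simp only [upper_factor] at binomial
  have hc : z ^ N / q ^ N ^ 2 ≠ 0 := by positivity
  refine mul_left_cancel₀ hc ?_
  rw [mul_comm (∏ k ∈ _, _), ← mul_assoc, binomial, Finset.mul_sum]
  refine Finset.sum_congr rfl fun k _ ↦ ?_
  rw [zpow_sq_sub hq, zpow_sub₀ hz, zpow_natCast, zpow_natCast, ← sq_pow_choose_two_mul_pow q k,
    hw, div_pow, mul_pow]
  field_simp
  ring

lemma finite_triple_product [TopologicalSpace K] {q z : K} (hq : q ≠ 0) (hz : z ≠ 0) (N : ℕ) :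
    (∏ k ∈ Finset.range N, (1 + z * q ^ (2 * k + 1))) *
        ∏ k ∈ Finset.range N, (1 + z⁻¹ * q ^ (2 * k + 1)) =
      ∑' n : ℤ, centralQBinom (q ^ 2) N n * (z ^ n * q ^ n ^ 2) := by
  rw [finite_triple_product_range hq hz, tsum_centralQBinom_mul]

end FiniteTripleProduct

section EulerProduct

variable {𝕜 : Type*} [NormedField 𝕜] {x : 𝕜}

/-- Euler's product `(x; x)_∞ = ∏_{k ≥ 1} (1 - x^k)`. -/
noncomputable def eulerProd (x : 𝕜) : 𝕜 := ∏' k : ℕ, (1 - x ^ (k + 1))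

lemma summable_norm_mul_pow_of_injective (c : 𝕜) (hx : ‖x‖ < 1) {e : ℕ → ℕ}
    (he : Function.Injective e) : Summable fun k ↦ ‖c * x ^ e k‖ := by
  simpa [Function.comp_def] using
    ((summable_geometric_of_lt_one (norm_nonneg x) hx).comp_injective he).mul_left ‖c‖

lemma norm_pow_lt_one (hx : ‖x‖ < 1) {n : ℕ} (hn : n ≠ 0) : ‖x ^ n‖ < 1 := by
  simpa using pow_lt_one₀ (norm_nonneg x) hx hn

lemma one_sub_pow_succ_ne_zero (hx : ‖x‖ < 1) (k : ℕ) : 1 - x ^ (k + 1) ≠ 0 := by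
  refine sub_ne_zero.2 fun h ↦ (pow_lt_one₀ (norm_nonneg x) hx k.succ_ne_zero).ne ?_
  rw [← norm_pow, ← h, norm_one]

lemma qPochhammer_ne_zero (hx : ‖x‖ < 1) (N : ℕ) : qPochhammer x N ≠ 0 :=
  Finset.prod_ne_zero_iff.2 fun k _ ↦ one_sub_pow_succ_ne_zero hx k

lemma centralQBinom_eq_div (hx : ‖x‖ < 1) {N : ℕ} {n : ℤ} (hn : n.natAbs ≤ N) :
    centralQBinom x N n =
      qPochhammer x (2 * N) / (qPochhammer x (N + n).toNat * qPochhammer x (N - n).toNat) := by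
  have h := qBinom_mul_qPochhammer_mul_qPochhammer x (N + n).toNat (N - n).toNat
  rw [show (N + n).toNat + (N - n).toNat = 2 * N by omega, mul_assoc] at h
  rw [centralQBinom, if_pos hn, eq_div_iff, h]
  exact mul_ne_zero (qPochhammer_ne_zero hx _) (qPochhammer_ne_zero hx _)

variable [CompleteSpace 𝕜]

lemma multipliable_one_add_mul_pow_of_injective (c : 𝕜) (hx : ‖x‖ < 1) {e : ℕ → ℕ}
    (he : Function.Injective e) : Multipliable fun k ↦ 1 + c * x ^ e k :=
  multipliable_one_add_of_summable (summable_norm_mul_pow_of_injective c hx he)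

lemma multipliable_one_add_mul_pow_odd (c : 𝕜) (hx : ‖x‖ < 1) :
    Multipliable fun k : ℕ ↦ 1 + c * x ^ (2 * k + 1) :=
  multipliable_one_add_mul_pow_of_injective c hx fun a b h ↦ by simpa using h

lemma multipliable_one_sub_pow_succ (hx : ‖x‖ < 1) : Multipliable fun k : ℕ ↦ 1 - x ^ (k + 1) := by
  simpa [sub_eq_add_neg] using
    multipliable_one_add_mul_pow_of_injective (-1) hx (add_left_injective 1)

lemma eulerProd_ne_zero (hx : ‖x‖ < 1) : eulerProd x ≠ 0 := by
  simpa [eulerProd, sub_eq_add_neg] using tprod_one_add_ne_zero_of_summable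
    (fun k ↦ by simpa [sub_eq_add_neg] using one_sub_pow_succ_ne_zero hx k)
    (summable_norm_mul_pow_of_injective (-1) hx (add_left_injective 1))

lemma tendsto_qPochhammer (hx : ‖x‖ < 1) : Tendsto (qPochhammer x) atTop (𝓝 (eulerProd x)) :=
  (multipliable_one_sub_pow_succ hx).tendsto_prod_tprod_nat

lemma multipliable_one_add_pow_succ (hx : ‖x‖ < 1) :
    Multipliable fun k : ℕ ↦ 1 + x ^ (k + 1) := by
  simpa using multipliable_one_add_mul_pow_of_injective 1 hx (add_left_injective 1)

lemma tprod_one_add_pow (hx : ‖x‖ < 1) :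
    ∏' k : ℕ, (1 + x ^ k) = 2 * ∏' k : ℕ, (1 + x ^ (k + 1)) := by
  rw [tprod_eq_zero_mul' (f := fun k ↦ 1 + x ^ k) (multipliable_one_add_pow_succ hx), pow_zero,
    one_add_one_eq_two]

lemma tprod_one_add_pow_succ (hx : ‖x‖ < 1) :
    ∏' k : ℕ, (1 + x ^ (k + 1)) = eulerProd (x ^ 2) / eulerProd x := by
  rw [eq_div_iff (eulerProd_ne_zero hx), eulerProd, eulerProd,
    ← (multipliable_one_add_pow_succ hx).tprod_mul (multipliable_one_sub_pow_succ hx)]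
  exact tprod_congr fun k ↦ by ring

lemma tprod_one_sub_pow_odd (hx : ‖x‖ < 1) :
    ∏' k : ℕ, (1 - x ^ (2 * k + 1)) = eulerProd x / eulerProd (x ^ 2) := by
  have hx2 := norm_pow_lt_one hx two_ne_zero
  have hodd : Multipliable fun k : ℕ ↦ 1 - x ^ (2 * k + 1) := by
    simpa [sub_eq_add_neg] using multipliable_one_add_mul_pow_odd (-1) hx
  have even_factor (k : ℕ) : 1 - x ^ (2 * k + 1 + 1) = 1 - (x ^ 2) ^ (k + 1) := by ring
  rw [eq_div_iff (eulerProd_ne_zero hx2), eulerProd, eulerProd,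
    ← tprod_even_mul_odd (f := fun k ↦ 1 - x ^ (k + 1)) hodd
      ((multipliable_one_sub_pow_succ hx2).congr fun k ↦ (even_factor k).symm)]
  simp only [even_factor]

lemma tprod_one_add_pow_odd (hx : ‖x‖ < 1) :
    ∏' k : ℕ, (1 + x ^ (2 * k + 1)) =
      eulerProd (x ^ 2) ^ 2 / (eulerProd x * eulerProd (x ^ 4)) := by
  have hx2 := norm_pow_lt_one hx two_ne_zero
  have hx4 := norm_pow_lt_one hx four_ne_zero
  have hadd : Multipliable fun k : ℕ ↦ 1 + x ^ (2 * k + 1) := by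
    simpa using multipliable_one_add_mul_pow_odd 1 hx
  have hsub : Multipliable fun k : ℕ ↦ 1 - x ^ (2 * k + 1) := by
    simpa [sub_eq_add_neg] using multipliable_one_add_mul_pow_odd (-1) hx
  have hmul : (∏' k : ℕ, (1 + x ^ (2 * k + 1))) * ∏' k : ℕ, (1 - x ^ (2 * k + 1)) =
      ∏' k : ℕ, (1 - (x ^ 2) ^ (2 * k + 1)) := by
    rw [← hadd.tprod_mul hsub]
    exact tprod_congr fun k ↦ by ring
  have h1 := eulerProd_ne_zero hx
  have h2 := eulerProd_ne_zero hx2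
  have h4 := eulerProd_ne_zero hx4
  rw [tprod_one_sub_pow_odd hx, tprod_one_sub_pow_odd hx2, ← pow_mul] at hmul
  rw [eq_div_of_mul_eq (div_ne_zero h1 h2) hmul]
  field_simp

end EulerProduct

section Tannery

variable {𝕜 : Type*} [NormedField 𝕜] [CompleteSpace 𝕜] {x : 𝕜}

lemma exists_norm_centralQBinom_le (hx : ‖x‖ < 1) :
    ∃ C, ∀ N n, ‖centralQBinom x N n‖ ≤ C := by
  obtain ⟨A, hA⟩ := (tendsto_qPochhammer hx).norm.bddAbove_range
  obtain ⟨B, hB⟩ := ((tendsto_qPochhammer hx).inv₀ (eulerProd_ne_zero hx)).norm.bddAbove_range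
  rw [mem_upperBounds, Set.forall_mem_range] at hA hB
  have hA0 : 0 ≤ A := (norm_nonneg _).trans (hA 0)
  have hB0 : 0 ≤ B := (norm_nonneg _).trans (hB 0)
  refine ⟨A * (B * B), fun N n ↦ ?_⟩
  by_cases hn : n.natAbs ≤ N
  · rw [centralQBinom_eq_div hx hn, div_eq_mul_inv, mul_inv, norm_mul, norm_mul]
    exact mul_le_mul (hA _) (mul_le_mul (hB _) (hB _) (norm_nonneg _) hB0) (by positivity) hA0
  · rw [centralQBinom, if_neg hn, norm_zero]
    positivity

lemma tendsto_centralQBinom (hx : ‖x‖ < 1) (n : ℤ) :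
    Tendsto (fun N ↦ centralQBinom x N n) atTop (𝓝 (eulerProd x)⁻¹) := by
  have hE := eulerProd_ne_zero hx
  have tendsto_comp {e : ℕ → ℕ} (he : ∀ N, N ≤ e N + n.natAbs) :
      Tendsto (fun N ↦ qPochhammer x (e N)) atTop (𝓝 (eulerProd x)) :=
    (tendsto_qPochhammer hx).comp <| tendsto_atTop.2 fun b ↦ by
      filter_upwards [eventually_ge_atTop (b + n.natAbs)] with N hN
      have := he N
      omega
  have h := (tendsto_comp (e := fun N ↦ 2 * N) fun N ↦ by omega).div
    ((tendsto_comp (e := fun N ↦ (N + n).toNat) fun N ↦ by omega).mul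
      (tendsto_comp (e := fun N ↦ (N - n).toNat) fun N ↦ by omega)) (mul_ne_zero hE hE)
  rw [div_mul_cancel_left₀ hE] at h
  refine h.congr' ?_
  filter_upwards [eventually_ge_atTop n.natAbs] with N hN
  exact (centralQBinom_eq_div hx hN).symm

lemma tendsto_tsum_centralQBinom_mul (hx : ‖x‖ < 1) {f : ℤ → 𝕜} (hf : Summable fun n ↦ ‖f n‖) :
    Tendsto (fun N ↦ ∑' n, centralQBinom x N n * f n) atTop (𝓝 ((eulerProd x)⁻¹ * ∑' n, f n)) := by
  obtain ⟨C, hC⟩ := exists_norm_centralQBinom_le hx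
  rw [← tsum_mul_left]
  refine tendsto_tsum_of_dominated_convergence (hf.mul_left C)
    (fun n ↦ (tendsto_centralQBinom hx n).mul_const _) (.of_forall fun N n ↦ ?_)
  rw [norm_mul]
  exact mul_le_mul_of_nonneg_right (hC N n) (norm_nonneg _)

end Tannery

section Theta

lemma summable_pow_mul_exp_mul_zpow_sq (c : ℝ) {r : ℝ} (hr₀ : 0 < r) (hr₁ : r < 1) (k : ℕ) :
    Summable fun n : ℤ ↦ |(n : ℝ)| ^ k * (exp (c * |(n : ℝ)|) * r ^ n ^ 2) := by
  have hT : 0 < -log r / π := div_pos (neg_pos.2 (log_neg hr₀ hr₁)) pi_pos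
  refine (summable_pow_mul_jacobiTheta₂_term_bound (c / (2 * π)) hT k).congr fun n ↦ ?_
  rw [← exp_log hr₀, ← rpow_intCast, ← exp_mul, ← exp_add, log_exp]
  push_cast
  congr 2
  field_simp
  ring

variable {𝕜 : Type*} [NormedField 𝕜] {q z : 𝕜}

lemma norm_zpow_le_exp (hz : z ≠ 0) (n : ℤ) : ‖z ^ n‖ ≤ exp (|log ‖z‖| * |(n : ℝ)|) := by
  rw [norm_zpow, ← exp_log (norm_pos_iff.2 hz), ← rpow_intCast, ← exp_mul, log_exp, exp_le_exp,
    ← abs_mul]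
  exact le_abs_self _

lemma norm_intCast_le_abs (n : ℤ) : ‖(n : 𝕜)‖ ≤ |(n : ℝ)| := by
  obtain ⟨m, rfl | rfl⟩ := n.eq_nat_or_neg <;> simpa using Nat.norm_cast_le (α := 𝕜) m

lemma norm_pow_mul_theta_term_le {r : ℝ} (hqr : ‖q‖ ≤ r) (hz : z ≠ 0) (k : ℕ) (n : ℤ) :
    ‖(n : 𝕜) ^ k * (z ^ n * q ^ n ^ 2)‖ ≤
      |(n : ℝ)| ^ k * (exp (|log ‖z‖| * |(n : ℝ)|) * r ^ n ^ 2) := by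
  have hr : ‖q ^ n ^ 2‖ ≤ r ^ n ^ 2 := by
    rw [norm_zpow]
    exact zpow_le_zpow_left₀ (sq_nonneg n) (norm_nonneg q) hqr
  rw [norm_mul, norm_mul, norm_pow]
  gcongr
  · exact norm_intCast_le_abs n
  · exact norm_zpow_le_exp hz n

lemma summable_norm_pow_mul_theta_term (hq : ‖q‖ < 1) (hz : z ≠ 0) (k : ℕ) :
    Summable fun n : ℤ ↦ ‖(n : 𝕜) ^ k * (z ^ n * q ^ n ^ 2)‖ := by
  obtain ⟨r, hqr, hr⟩ := exists_between hq
  exact .of_nonneg_of_le (fun _ ↦ norm_nonneg _) (norm_pow_mul_theta_term_le hqr.le hz k)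
    (summable_pow_mul_exp_mul_zpow_sq _ ((norm_nonneg q).trans_lt hqr) hr k)

lemma summable_norm_theta_term (hq : ‖q‖ < 1) (hz : z ≠ 0) :
    Summable fun n : ℤ ↦ ‖z ^ n * q ^ n ^ 2‖ := by
  simpa using summable_norm_pow_mul_theta_term hq hz 0

/-- The theta function `θ(z, q) = ∑_{n ∈ ℤ} z^n q^{n²}`, in the multiplicative variables
`z = e^{2πiv}` and `q = e^{πiτ}`. -/
noncomputable def theta (z q : 𝕜) : 𝕜 := ∑' n : ℤ, z ^ n * q ^ n ^ 2

lemma theta_zero_right (z : 𝕜) : theta z 0 = 1 := by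
  rw [theta, tsum_eq_single 0 fun n hn ↦ by simp [zero_zpow, hn]]
  simp

variable [CompleteSpace 𝕜]

theorem jacobi_triple_product (hq₀ : q ≠ 0) (hq : ‖q‖ < 1) (hz : z ≠ 0) :
    theta z q = eulerProd (q ^ 2) *
      ((∏' k : ℕ, (1 + z * q ^ (2 * k + 1))) * ∏' k : ℕ, (1 + z⁻¹ * q ^ (2 * k + 1))) := by
  have hq2 := norm_pow_lt_one hq two_ne_zero
  have products := (multipliable_one_add_mul_pow_odd z hq).tendsto_prod_tprod_nat.mul
    (multipliable_one_add_mul_pow_odd z⁻¹ hq).tendsto_prod_tprod_nat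
  simp only [finite_triple_product hq₀ hz] at products
  have series := tendsto_tsum_centralQBinom_mul hq2 (summable_norm_theta_term hq hz)
  rw [tendsto_nhds_unique products series, mul_inv_cancel_left₀ (eulerProd_ne_zero hq2), theta]

lemma theta_one_eq (hq₀ : q ≠ 0) (hq : ‖q‖ < 1) :
    theta 1 q = eulerProd (q ^ 2) ^ 5 / (eulerProd q ^ 2 * eulerProd (q ^ 4) ^ 2) := by
  simp only [jacobi_triple_product hq₀ hq one_ne_zero, inv_one, one_mul, tprod_one_add_pow_odd hq]
  ring

lemma theta_neg_one_eq (hq₀ : q ≠ 0) (hq : ‖q‖ < 1) :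
    theta (-1) q = eulerProd q ^ 2 / eulerProd (q ^ 2) := by
  have h2 := eulerProd_ne_zero (norm_pow_lt_one hq two_ne_zero)
  simp only [jacobi_triple_product hq₀ hq (neg_ne_zero.2 one_ne_zero), inv_neg, inv_one,
    neg_one_mul, ← sub_eq_add_neg, tprod_one_sub_pow_odd hq]
  field_simp

lemma theta_inv_self_eq (hq₀ : q ≠ 0) (hq : ‖q‖ < 1) :
    theta q⁻¹ q = 2 * eulerProd (q ^ 4) ^ 2 / eulerProd (q ^ 2) := by
  have hq2 := norm_pow_lt_one hq two_ne_zero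
  have h2 := eulerProd_ne_zero hq2
  have left_factor (k : ℕ) : 1 + q⁻¹ * q ^ (2 * k + 1) = 1 + (q ^ 2) ^ k := by
    rw [pow_succ', inv_mul_cancel_left₀ hq₀, pow_mul]
  have right_factor (k : ℕ) : 1 + q * q ^ (2 * k + 1) = 1 + (q ^ 2) ^ (k + 1) := by ring
  have hq4 : (q ^ 2) ^ 2 = q ^ 4 := by rw [← pow_mul]
  simp only [jacobi_triple_product hq₀ hq (inv_ne_zero hq₀), inv_inv, left_factor, right_factor,
    tprod_one_add_pow hq2, tprod_one_add_pow_succ hq2, hq4]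
  field_simp

lemma theta_neg_inv_self (hq₀ : q ≠ 0) (hq : ‖q‖ < 1) : theta (-q⁻¹) q = 0 := by
  rw [jacobi_triple_product hq₀ hq (neg_ne_zero.2 (inv_ne_zero hq₀)),
    tprod_of_exists_eq_zero (f := fun k : ℕ ↦ 1 + -q⁻¹ * q ^ (2 * k + 1)) ⟨0, by simp [hq₀]⟩,
    zero_mul, mul_zero]

end Theta

section JacobiCube

variable {𝕜 : Type*} [NontriviallyNormedField 𝕜] {q : 𝕜}

lemma hasDerivAt_triple_product (hq₀ : q ≠ 0) (N : ℕ) :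
    HasDerivAt (fun z ↦ (∏ k ∈ Finset.range (N + 1), (1 + z * q ^ (2 * k + 1))) *
        ∏ k ∈ Finset.range (N + 1), (1 + z⁻¹ * q ^ (2 * k + 1)))
      (q * (qPochhammer (q ^ 2) N * qPochhammer (q ^ 2) (N + 1))) (-q⁻¹) := by
  have hz₀ : -q⁻¹ ≠ 0 := neg_ne_zero.2 (inv_ne_zero hq₀)
  set cofactor : 𝕜 → 𝕜 := fun z ↦ (∏ k ∈ Finset.range N, (1 + z * q ^ (2 * (k + 1) + 1))) *
    ∏ k ∈ Finset.range (N + 1), (1 + z⁻¹ * q ^ (2 * k + 1)) with hcofactor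
  have cofactor_apply :
      cofactor (-q⁻¹) = qPochhammer (q ^ 2) N * qPochhammer (q ^ 2) (N + 1) := by
    simp only [hcofactor, qPochhammer]
    congr 1 <;> refine Finset.prod_congr rfl fun k _ ↦ ?_
    · field_simp
      ring
    · rw [inv_neg, inv_inv]
      ring
  have differentiableAt_cofactor : DifferentiableAt 𝕜 cofactor (-q⁻¹) :=
    .mul (.fun_finsetProd fun k _ ↦ by fun_prop)
      (.fun_finsetProd fun k _ ↦ ((differentiableAt_inv hz₀).mul_const _).const_add 1)
  have deriv_factor : HasDerivAt (fun z ↦ 1 + z * q) q (-q⁻¹) := by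
    simpa using ((hasDerivAt_id (-q⁻¹)).mul_const q).const_add 1
  have product_rule := deriv_factor.mul differentiableAt_cofactor.hasDerivAt
  rw [cofactor_apply, neg_mul, inv_mul_cancel₀ hq₀, add_neg_cancel, zero_mul, add_zero]
    at product_rule
  refine product_rule.congr_of_eventuallyEq (.of_forall fun z ↦ ?_)
  simp only [hcofactor, Pi.mul_apply, Finset.prod_range_succ' _ N, mul_zero, zero_add, pow_one]
  ring

lemma qPochhammer_mul_qPochhammer_eq_tsum (hq₀ : q ≠ 0) (N : ℕ) :
    qPochhammer (q ^ 2) N * qPochhammer (q ^ 2) (N + 1) =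
      -∑' n : ℤ, centralQBinom (q ^ 2) (N + 1) n * (n * ((-q⁻¹) ^ n * q ^ n ^ 2)) := by
  have hz₀ : -q⁻¹ ≠ 0 := neg_ne_zero.2 (inv_ne_zero hq₀)
  have term_by_term := HasDerivAt.fun_sum (u := Finset.range (2 * (N + 1) + 1)) fun k _ ↦
    ((hasDerivAt_zpow ((k : ℤ) - (N + 1 : ℕ)) (-q⁻¹) (.inl hz₀)).mul_const
      (q ^ ((k : ℤ) - (N + 1 : ℕ)) ^ 2)).const_mul (qBinom (q ^ 2) (2 * (N + 1)) k)
  have product_rule := (hasDerivAt_triple_product hq₀ N).congr_of_eventuallyEq <| by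
    filter_upwards [eventually_ne_nhds hz₀] with z hz
    exact (finite_triple_product_range hq₀ hz (N + 1)).symm
  have h := product_rule.unique term_by_term
  rw [tsum_centralQBinom_mul, ← mul_right_inj' hq₀, h, mul_neg, ← neg_mul, Finset.mul_sum]
  refine Finset.sum_congr rfl fun k _ ↦ ?_
  rw [zpow_sub_one₀ hz₀, inv_neg, inv_inv]
  ring

variable [CompleteSpace 𝕜]

theorem tsum_intCast_mul_theta_term_neg_inv (hq₀ : q ≠ 0) (hq : ‖q‖ < 1) :
    ∑' n : ℤ, n * ((-q⁻¹) ^ n * q ^ n ^ 2) = -eulerProd (q ^ 2) ^ 3 := by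
  have hq2 := norm_pow_lt_one hq two_ne_zero
  have hz₀ : -q⁻¹ ≠ 0 := neg_ne_zero.2 (inv_ne_zero hq₀)
  have products := (tendsto_qPochhammer hq2).mul
    ((tendsto_qPochhammer hq2).comp (tendsto_add_atTop_nat 1))
  have linear := summable_norm_pow_mul_theta_term hq hz₀ 1
  simp only [pow_one] at linear
  have series :=
    ((tendsto_tsum_centralQBinom_mul hq2 linear).comp (tendsto_add_atTop_nat 1)).neg
  have h := tendsto_nhds_unique products
    (series.congr fun N ↦ (qPochhammer_mul_qPochhammer_eq_tsum hq₀ N).symm)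
  have hE := eulerProd_ne_zero hq2
  rw [← mul_neg, eq_inv_mul_iff_mul_eq₀ hE] at h
  rw [eq_comm, neg_eq_iff_eq_neg, ← h]
  ring

theorem tsum_odd_mul_theta_term_neg_inv (hq₀ : q ≠ 0) (hq : ‖q‖ < 1) :
    ∑' n : ℤ, (2 * n - 1) * ((-q⁻¹) ^ n * q ^ n ^ 2) = -2 * eulerProd (q ^ 2) ^ 3 := by
  have hz₀ : -q⁻¹ ≠ 0 := neg_ne_zero.2 (inv_ne_zero hq₀)
  have linear : Summable fun n : ℤ ↦ (n : 𝕜) * ((-q⁻¹) ^ n * q ^ n ^ 2) := by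
    simpa using (summable_norm_pow_mul_theta_term hq hz₀ 1).of_norm
  have h : ∑' n : ℤ, (-q⁻¹) ^ n * q ^ n ^ 2 = 0 := theta_neg_inv_self hq₀ hq
  simp only [sub_mul, one_mul, mul_assoc]
  rw [(linear.mul_left 2).tsum_sub (summable_norm_theta_term hq hz₀).of_norm, tsum_mul_left,
    tsum_intCast_mul_theta_term_neg_inv hq₀ hq, h]
  ring

end JacobiCube

section ThetaDeriv

variable {𝕜 : Type*} [NormedField 𝕜] {q z : 𝕜}

/-- The termwise `q`-derivative `∑_{n ∈ ℤ} n² z^n q^{n² - 1}` of `theta z q`. -/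
noncomputable def thetaDeriv (z q : 𝕜) : 𝕜 := ∑' n : ℤ, n ^ 2 * (z ^ n * q ^ (n ^ 2 - 1))

lemma norm_thetaDeriv_term_le {r : ℝ} (hr : 0 < r) (hqr : ‖q‖ ≤ r) (hz : z ≠ 0) (n : ℤ) :
    ‖(n : 𝕜) ^ 2 * (z ^ n * q ^ (n ^ 2 - 1))‖ ≤
      r⁻¹ * (|(n : ℝ)| ^ 2 * (exp (|log ‖z‖| * |(n : ℝ)|) * r ^ n ^ 2)) := by
  rcases eq_or_ne n 0 with rfl | hn
  · simp
  have hr : ‖q ^ (n ^ 2 - 1)‖ ≤ r⁻¹ * r ^ n ^ 2 := by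
    rw [norm_zpow, ← zpow_neg_one r, ← zpow_add₀ hr.ne', neg_add_eq_sub]
    exact zpow_le_zpow_left₀ (Int.sub_nonneg_of_le (sq_pos_of_ne_zero hn)) (norm_nonneg q) hqr
  calc ‖(n : 𝕜) ^ 2 * (z ^ n * q ^ (n ^ 2 - 1))‖
      = ‖(n : 𝕜)‖ ^ 2 * (‖z ^ n‖ * ‖q ^ (n ^ 2 - 1)‖) := by rw [norm_mul, norm_mul, norm_pow]
    _ ≤ |(n : ℝ)| ^ 2 * (exp (|log ‖z‖| * |(n : ℝ)|) * (r⁻¹ * r ^ n ^ 2)) := by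
      gcongr
      · exact norm_intCast_le_abs n
      · exact norm_zpow_le_exp hz n
    _ = _ := by ring

theorem hasDerivAt_theta {𝕜 : Type*} [RCLike 𝕜] {q z : 𝕜} (hq : ‖q‖ < 1) (hz : z ≠ 0) :
    HasDerivAt (theta z) (thetaDeriv z q) q := by
  obtain ⟨r, hqr, hr⟩ := exists_between hq
  have hr₀ : 0 < r := (norm_nonneg q).trans_lt hqr
  refine hasDerivAt_tsum_of_isPreconnected (y₀ := q)
    ((summable_pow_mul_exp_mul_zpow_sq |log ‖z‖| hr₀ hr 2).mul_left r⁻¹) Metric.isOpen_ball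
    (convex_ball (0 : 𝕜) r).isPreconnected (fun n y _ ↦ ?_)
    (fun n y hy ↦ norm_thetaDeriv_term_le hr₀ (mem_ball_zero_iff.1 hy).le hz n)
    (mem_ball_zero_iff.2 hqr) (summable_norm_theta_term hq hz).of_norm (mem_ball_zero_iff.2 hqr)
  refine ((hasDerivAt_zpow (n ^ 2) y (.inr (sq_nonneg n))).const_mul (z ^ n)).congr_deriv ?_
  push_cast
  ring

end ThetaDeriv

section LatticeRotation

lemma tsum_int_prod_eq_tsum_rotate {α : Type*} [AddCommMonoid α] [TopologicalSpace α]
    {f : ℤ × ℤ → α} (hf : ∀ a b, Even (a + b) → f (a, b) = 0) :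
    ∑' p, f p = ∑' p : ℤ × ℤ, f (p.1 + p.2 - 1, p.1 - p.2) := by
  have hinj : Function.Injective fun p : ℤ × ℤ ↦ (p.1 + p.2 - 1, p.1 - p.2) := by
    rintro ⟨a, b⟩ ⟨c, d⟩ h
    grind
  refine (hinj.tsum_eq fun ⟨a, b⟩ hab ↦ ?_).symm
  obtain ⟨c, hc⟩ := Int.not_even_iff_odd.1 (mt (hf a b) hab)
  exact ⟨(c + 1, c + 1 - b), by grind⟩

lemma tsum_int_prod_eq_tsum_rotate_of_swap {𝕜 : Type*} [NormedField 𝕜] [CharZero 𝕜]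
    {f : ℤ × ℤ → 𝕜} (hf : Summable f) (hswap : ∀ a b, f (b, a) = -(-1) ^ (a + b) * f (a, b)) :
    ∑' p, f p = ∑' p : ℤ × ℤ, f (p.1 + p.2 - 1, p.1 - p.2) := by
  have hsum : ∑' p : ℤ × ℤ, f p.swap = ∑' p, f p := (Equiv.prodComm ℤ ℤ).tsum_eq f
  have hsummable : Summable fun p : ℤ × ℤ ↦ f p.swap := (Equiv.prodComm ℤ ℤ).summable_iff.2 hf
  have symmetrize : ∑' p, f p = ∑' p : ℤ × ℤ, (f p + f p.swap) / 2 := by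
    rw [tsum_div_const, hf.tsum_add hsummable, hsum, add_self_div_two]
  rw [symmetrize, tsum_int_prod_eq_tsum_rotate]
  · refine tsum_congr fun ⟨m, n⟩ ↦ ?_
    have hodd : Odd (m + n - 1 + (m - n)) := ⟨m - 1, by ring⟩
    have h := hswap (m + n - 1) (m - n)
    rw [hodd.neg_one_zpow] at h
    rw [Prod.swap_prod_mk, h]
    ring
  · intro a b hab
    rw [Prod.swap_prod_mk, hswap a b, hab.neg_one_zpow]
    ring

variable {K : Type*} [Field K] {q z w : K}

lemma theta_term_mul_theta_term_rotate (hq : q ≠ 0) (hz : z ≠ 0) (hw : w ≠ 0) (m n : ℤ) :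
    z ^ (m + n - 1) * q ^ (m + n - 1) ^ 2 * (w ^ (m - n) * q ^ (m - n) ^ 2) =
      z⁻¹ * q * ((z * w / q ^ 2) ^ m * (q ^ 2) ^ m ^ 2 *
        ((z / w / q ^ 2) ^ n * (q ^ 2) ^ n ^ 2)) := by
  have exponents : q ^ (m + n - 1) ^ 2 * q ^ (m - n) ^ 2 =
      q * ((q ^ 2) ^ m ^ 2 / (q ^ 2) ^ m * ((q ^ 2) ^ n ^ 2 / (q ^ 2) ^ n)) := by
    nth_rw 3 [← zpow_one q]
    simp only [← zpow_natCast q 2, ← zpow_mul, ← zpow_sub₀ hq, ← zpow_add₀ hq]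
    congr 1
    push_cast
    ring
  rw [mul_mul_mul_comm, exponents, zpow_sub₀ hz, zpow_add₀ hz, zpow_sub₀ hw, zpow_one]
  simp only [div_zpow, mul_zpow]
  ring

lemma neg_theta_term_mul_neg_theta_term (q z w : K) (a b : ℤ) :
    (-z) ^ a * q ^ a ^ 2 * ((-w) ^ b * q ^ b ^ 2) =
      (-1) ^ (a + b) * (z ^ a * q ^ a ^ 2 * (w ^ b * q ^ b ^ 2)) := by
  rw [neg_eq_neg_one_mul z, neg_eq_neg_one_mul w, mul_zpow, mul_zpow,
    zpow_add₀ (neg_ne_zero.2 one_ne_zero)]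
  ring

end LatticeRotation

section ThetaIdentities

variable {𝕜 : Type*} [NormedField 𝕜] {q z w : 𝕜}

lemma thetaDeriv_eq_inv_mul_tsum (hq₀ : q ≠ 0) (z : 𝕜) :
    thetaDeriv z q = q⁻¹ * ∑' n : ℤ, n ^ 2 * (z ^ n * q ^ n ^ 2) := by
  rw [thetaDeriv, ← tsum_mul_left]
  refine tsum_congr fun n ↦ ?_
  rw [zpow_sub_one₀ hq₀]
  ring

lemma summable_norm_odd_mul_theta_term (hq : ‖q‖ < 1) (hz : z ≠ 0) :
    Summable fun n : ℤ ↦ ‖(2 * n - 1 : 𝕜) * (z ^ n * q ^ n ^ 2)‖ := by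
  refine .of_nonneg_of_le (fun _ ↦ norm_nonneg _) (fun n ↦ ?_)
    (((summable_norm_pow_mul_theta_term hq hz 1).mul_left ‖(2 : 𝕜)‖).add
      (summable_norm_theta_term hq hz))
  rw [sub_mul, one_mul, mul_assoc, pow_one, ← norm_mul]
  exact norm_sub_le _ _

variable [CompleteSpace 𝕜]

theorem theta_mul_theta_sub_theta_neg_mul_theta_neg (hq₀ : q ≠ 0) (hq : ‖q‖ < 1) (hz : z ≠ 0)
    (hw : w ≠ 0) :
    theta z q * theta w q - theta (-z) q * theta (-w) q =
      2 * z⁻¹ * q * (theta (z * w / q ^ 2) (q ^ 2) * theta (z / w / q ^ 2) (q ^ 2)) := by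
  have hq2 := norm_pow_lt_one hq two_ne_zero
  have summable_term {u x : 𝕜} (hu : u ≠ 0) (hx : ‖x‖ < 1) := summable_norm_theta_term hx hu
  have hsub := (summable_mul_of_summable_norm (summable_term hz hq) (summable_term hw hq)).tsum_sub
    (summable_mul_of_summable_norm (summable_term (neg_ne_zero.2 hz) hq)
      (summable_term (neg_ne_zero.2 hw) hq))
  simp only [theta]
  rw [tsum_mul_tsum_of_summable_norm (summable_term hz hq) (summable_term hw hq),
    tsum_mul_tsum_of_summable_norm (summable_term (neg_ne_zero.2 hz) hq)
      (summable_term (neg_ne_zero.2 hw) hq), ← hsub,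
    tsum_mul_tsum_of_summable_norm (summable_term (by positivity) hq2)
      (summable_term (by positivity) hq2), ← tsum_mul_left, tsum_int_prod_eq_tsum_rotate]
  · refine tsum_congr fun ⟨m, n⟩ ↦ ?_
    have hodd : Odd (m + n - 1 + (m - n)) := ⟨m - 1, by ring⟩
    rw [neg_theta_term_mul_neg_theta_term, hodd.neg_one_zpow,
      theta_term_mul_theta_term_rotate hq₀ hz hw]
    ring
  · intro a b hab
    rw [neg_theta_term_mul_neg_theta_term, hab.neg_one_zpow]
    ring

lemma hasSum_theta_wronskian (hq₀ : q ≠ 0) (hq : ‖q‖ < 1) (hz : z ≠ 0) :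
    HasSum (fun p : ℤ × ℤ ↦ ((p.1 : 𝕜) ^ 2 - (p.2 : 𝕜) ^ 2) *
        (z ^ p.1 * q ^ p.1 ^ 2 * ((-z) ^ p.2 * q ^ p.2 ^ 2)))
      (q * (thetaDeriv z q * theta (-z) q - theta z q * thetaDeriv (-z) q)) := by
  have squares {u : 𝕜} (hu : u ≠ 0) := summable_norm_pow_mul_theta_term hq hu 2
  have terms {u : 𝕜} (hu : u ≠ 0) := summable_norm_theta_term hq hu
  have hz' : -z ≠ 0 := neg_ne_zero.2 hz
  have hleft := (summable_mul_of_summable_norm (squares hz) (terms hz')).hasSum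
  have hright := (summable_mul_of_summable_norm (terms hz) (squares hz')).hasSum
  rw [← tsum_mul_tsum_of_summable_norm (squares hz) (terms hz')] at hleft
  rw [← tsum_mul_tsum_of_summable_norm (terms hz) (squares hz')] at hright
  rw [thetaDeriv_eq_inv_mul_tsum hq₀, thetaDeriv_eq_inv_mul_tsum hq₀, mul_sub, mul_assoc,
    mul_inv_cancel_left₀ hq₀, mul_left_comm (theta z q), mul_inv_cancel_left₀ hq₀, theta, theta]
  exact (hleft.sub hright).congr_fun fun p ↦ by ring

theorem theta_wronskian [CharZero 𝕜] (hq₀ : q ≠ 0) (hq : ‖q‖ < 1) (hz : z ≠ 0) :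
    thetaDeriv z q * theta (-z) q - theta z q * thetaDeriv (-z) q =
      z⁻¹ * ((∑' n : ℤ, (2 * n - 1) * ((z * -z / q ^ 2) ^ n * (q ^ 2) ^ n ^ 2)) *
        ∑' n : ℤ, (2 * n - 1) * ((z / -z / q ^ 2) ^ n * (q ^ 2) ^ n ^ 2)) := by
  have hq2 := norm_pow_lt_one hq two_ne_zero
  have hz' : -z ≠ 0 := neg_ne_zero.2 hz
  have hu : z * -z / q ^ 2 ≠ 0 := by positivity
  have hv : z / -z / q ^ 2 ≠ 0 := by positivity
  have hsum := hasSum_theta_wronskian hq₀ hq hz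
  have rotation := tsum_int_prod_eq_tsum_rotate_of_swap hsum.summable fun a b ↦ by
    have h := neg_theta_term_mul_neg_theta_term q z (-z) a b
    rw [neg_neg] at h
    linear_combination ((b : 𝕜) ^ 2 - a ^ 2) * h
  rw [hsum.tsum_eq] at rotation
  let term (u : 𝕜) (n : ℤ) : 𝕜 := (2 * n - 1) * (u ^ n * (q ^ 2) ^ n ^ 2)
  have product := tsum_mul_tsum_of_summable_norm (f := term _) (g := term _)
    (summable_norm_odd_mul_theta_term hq2 hu) (summable_norm_odd_mul_theta_term hq2 hv)
  refine mul_left_cancel₀ hq₀ (rotation.trans ?_)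
  rw [product, ← mul_assoc, ← tsum_mul_left]
  refine tsum_congr fun ⟨m, n⟩ ↦ ?_
  rw [theta_term_mul_theta_term_rotate hq₀ hz hz' m n]
  push_cast
  ring

theorem theta_wronskian_one {𝕜 : Type*} [NontriviallyNormedField 𝕜] [CompleteSpace 𝕜]
    [CharZero 𝕜] {q : 𝕜} (hq₀ : q ≠ 0) (hq : ‖q‖ < 1) :
    thetaDeriv 1 q * theta (-1) q - theta 1 q * thetaDeriv (-1) q = 4 * eulerProd (q ^ 4) ^ 6 := by
  have h := tsum_odd_mul_theta_term_neg_inv (pow_ne_zero 2 hq₀) (norm_pow_lt_one hq two_ne_zero)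
  have hz : 1 * -1 / q ^ 2 = -(q ^ 2)⁻¹ := by ring
  have hz' : 1 / -1 / q ^ 2 = -(q ^ 2)⁻¹ := by ring
  rw [theta_wronskian hq₀ hq one_ne_zero, hz, hz', h, ← pow_mul]
  ring

end ThetaIdentities

section EtaQuotients

lemma hasProd_pow_const {α ι : Type*} [CommMonoid α] [TopologicalSpace α] [ContinuousMul α]
    {f : ι → α} {a : α} (hf : HasProd f a) (n : ℕ) : HasProd (fun i ↦ f i ^ n) (a ^ n) := by
  simpa using hasProd_prod (s := Finset.range n) fun _ _ ↦ hf

lemma hasProd_eulerProd_pow {𝕜 : Type*} [NormedField 𝕜] [CompleteSpace 𝕜] {q : 𝕜} (hq : ‖q‖ < 1)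
    {k : ℕ} (hk : k ≠ 0) : HasProd (fun j : ℕ ↦ 1 - q ^ (k * (j + 1))) (eulerProd (q ^ k)) := by
  simpa only [pow_mul, eulerProd] using
    (multipliable_one_sub_pow_succ (norm_pow_lt_one hq hk)).hasProd

lemma theta_neg_one_ne_zero {𝕜 : Type*} [NormedField 𝕜] [CompleteSpace 𝕜] {q : 𝕜}
    (hq : ‖q‖ < 1) : theta (-1) q ≠ 0 := by
  rcases eq_or_ne q 0 with rfl | hq₀
  · rw [theta_zero_right]
    exact one_ne_zero
  · rw [theta_neg_one_eq hq₀ hq]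
    exact div_ne_zero (pow_ne_zero 2 (eulerProd_ne_zero hq))
      (eulerProd_ne_zero (norm_pow_lt_one hq two_ne_zero))

lemma hasDerivAt_theta_ratio {𝕜 : Type*} [RCLike 𝕜] {q : 𝕜} (hq : ‖q‖ < 1) :
    HasDerivAt (fun q ↦ ((theta 1 q / theta (-1) q) ^ 2 - 1) / 8)
      (theta 1 q * (thetaDeriv 1 q * theta (-1) q - theta 1 q * thetaDeriv (-1) q) /
        (4 * theta (-1) q ^ 3)) q := by
  have hne := theta_neg_one_ne_zero hq
  refine (((((hasDerivAt_theta hq one_ne_zero).div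
    (hasDerivAt_theta hq (neg_ne_zero.2 one_ne_zero)) hne).pow 2).sub_const 1).div_const
      8).congr_deriv ?_
  simp only [Pi.div_apply, Nat.cast_ofNat, Nat.add_one_sub_one, pow_one]
  field_simp
  ring

variable {q : ℝ}

lemma U4_eq_eulerProd (hq : ‖q‖ < 1) :
    U4 q = eulerProd (q ^ 2) ^ 8 * eulerProd (q ^ 4) ^ 4 / eulerProd q ^ 8 := by
  have factor {k : ℕ} (hk : k ≠ 0) (n : ℕ) := hasProd_pow_const (hasProd_eulerProd_pow hq hk) n
  have h1 := factor one_ne_zero 8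
  simp only [one_mul, pow_one] at h1
  exact (((factor two_ne_zero 8).mul (factor four_ne_zero 4)).div₀ h1
    (pow_ne_zero 8 (eulerProd_ne_zero hq))).tprod_eq

lemma V4_eq_eulerProd (hq : ‖q‖ < 1) :
    V4 q = q * (eulerProd (q ^ 2) ^ 2 * eulerProd (q ^ 8) ^ 4 /
      (eulerProd q ^ 4 * eulerProd (q ^ 4) ^ 2)) := by
  have factor {k : ℕ} (hk : k ≠ 0) (n : ℕ) := hasProd_pow_const (hasProd_eulerProd_pow hq hk) n
  have h1 := factor one_ne_zero 4
  simp only [one_mul, pow_one] at h1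
  have hne := mul_ne_zero (pow_ne_zero 4 (eulerProd_ne_zero hq))
    (pow_ne_zero 2 (eulerProd_ne_zero (norm_pow_lt_one hq four_ne_zero)))
  rw [V4, (((factor two_ne_zero 2).mul (factor (by norm_num) 4)).div₀
    (h1.mul (factor four_ne_zero 2)) hne).tprod_eq]

lemma V4_eq_theta_inv_sq_div (hq₀ : q ≠ 0) (hq : ‖q‖ < 1) :
    V4 q = q * theta (q ^ 2)⁻¹ (q ^ 2) ^ 2 / (4 * theta (-1) q ^ 2) := by
  have hq2 := norm_pow_lt_one hq two_ne_zero
  have h1 := eulerProd_ne_zero hq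
  have h2 := eulerProd_ne_zero hq2
  have h4 := eulerProd_ne_zero (norm_pow_lt_one hq four_ne_zero)
  rw [V4_eq_eulerProd hq, theta_inv_self_eq (pow_ne_zero 2 hq₀) hq2, theta_neg_one_eq hq₀ hq,
    ← pow_mul, ← pow_mul]
  field_simp
  norm_num

lemma V4_zero : V4 0 = 0 := zero_mul _

theorem V4_eq_theta_ratio (hq : ‖q‖ < 1) : V4 q = ((theta 1 q / theta (-1) q) ^ 2 - 1) / 8 := by
  rcases eq_or_ne q 0 with rfl | hq₀
  · simp [V4_zero, theta_zero_right]
  have hne := theta_neg_one_ne_zero hq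
  have h := theta_mul_theta_sub_theta_neg_mul_theta_neg hq₀ hq one_ne_zero one_ne_zero
  simp only [mul_one, div_one, inv_one, one_div] at h
  rw [V4_eq_theta_inv_sq_div hq₀ hq, div_pow, div_sub_one (pow_ne_zero 2 hne), div_div,
    div_eq_div_iff (by positivity) (by positivity)]
  linear_combination -4 * theta (-1) q ^ 2 * h

lemma V4_eventuallyEq_theta_ratio (hq : ‖q‖ < 1) :
    V4 =ᶠ[𝓝 q] fun q ↦ ((theta 1 q / theta (-1) q) ^ 2 - 1) / 8 := by
  filter_upwards [Metric.isOpen_ball.mem_nhds (mem_ball_zero_iff.2 hq)] with x hx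
  exact V4_eq_theta_ratio (mem_ball_zero_iff.1 hx)

lemma continuousAt_V4 (hq : ‖q‖ < 1) : ContinuousAt V4 q :=
  (hasDerivAt_theta_ratio hq).continuousAt.congr (V4_eventuallyEq_theta_ratio hq).symm

theorem hasDerivAt_V4 (hq₀ : q ≠ 0) (hq : ‖q‖ < 1) : HasDerivAt V4 (U4 q) q := by
  have h1 := eulerProd_ne_zero hq
  have h2 := eulerProd_ne_zero (norm_pow_lt_one hq two_ne_zero)
  have h4 := eulerProd_ne_zero (norm_pow_lt_one hq four_ne_zero)
  refine ((hasDerivAt_theta_ratio hq).congr_of_eventuallyEq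
    (V4_eventuallyEq_theta_ratio hq)).congr_deriv ?_
  rw [theta_wronskian_one hq₀ hq, U4_eq_eulerProd hq, theta_one_eq hq₀ hq, theta_neg_one_eq hq₀ hq]
  field_simp

lemma U4_nonneg (hq : ‖q‖ < 1) : 0 ≤ U4 q := by
  rw [U4_eq_eulerProd hq]
  positivity

theorem integral_U4 (hq : ‖q‖ < 1) : ∫ t in (0 : ℝ)..q, U4 t = V4 q := by
  have norm_lt {t : ℝ} (ht : t ∈ Set.uIcc 0 q) : ‖t‖ < 1 := by
    have h := Set.abs_sub_left_of_mem_uIcc ht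
    rw [sub_zero, sub_zero] at h
    exact h.trans_lt hq
  have hcont : ContinuousOn V4 (Set.uIcc 0 q) := fun t ht ↦
    (continuousAt_V4 (norm_lt ht)).continuousWithinAt
  have hderiv (t : ℝ) (ht : t ∈ Set.Ioo (min 0 q) (max 0 q)) : HasDerivAt V4 (U4 t) t :=
    hasDerivAt_V4 (by rintro rfl; grind) (norm_lt (Set.Ioo_subset_Icc_self ht))
  have hU4 : IntervalIntegrable U4 MeasureTheory.volume 0 q :=
    intervalIntegral.intervalIntegrable_deriv_of_nonneg hcont hderiv fun t ht ↦
      U4_nonneg (norm_lt (Set.Ioo_subset_Icc_self ht))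
  rw [intervalIntegral.integral_eq_sub_of_hasDeriv_right hcont
    (fun t ht ↦ (hderiv t ht).hasDerivWithinAt) hU4, V4_zero, sub_zero]

end EtaQuotients

section SpecialValue

lemma cexp_neg_quadratic_add_eq_theta_term (a : ℝ) (n : ℤ) :
    Complex.exp (-π * a * n ^ 2 + 2 * π * (Complex.I / 2) * n) =
      (((-1) ^ n * exp (-π * a) ^ n ^ 2 : ℝ) : ℂ) := by
  have sign : Complex.exp (2 * π * (Complex.I / 2) * n) = (-1) ^ n := by
    rw [← Complex.exp_pi_mul_I, ← Complex.exp_int_mul]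
    congr 1
    ring
  have gaussian : exp (-π * a) ^ n ^ 2 = exp (-π * a * n ^ 2) := by
    rw [← rpow_intCast, ← exp_mul]
    push_cast
    rfl
  rw [Complex.exp_add, sign, gaussian]
  push_cast
  ring

lemma cexp_neg_quadratic_shift_eq_theta_term (a : ℝ) (n : ℤ) :
    Complex.exp (-π / a * (n + Complex.I * (Complex.I / 2)) ^ 2) =
      ((exp (-π / (4 * a)) * ((exp (-π / a))⁻¹ ^ n * exp (-π / a) ^ n ^ 2) : ℝ) : ℂ) := by
  have shift : (n : ℂ) + Complex.I * (Complex.I / 2) = n - 1 / 2 := by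
    linear_combination (1 / 2 : ℂ) * Complex.I_mul_I
  rw [shift, ← exp_neg, ← rpow_intCast, ← rpow_intCast, ← exp_mul, ← exp_mul, ← exp_add, ← exp_add]
  push_cast
  congr 1
  ring

theorem theta_neg_one_exp_neg_pi_mul {a : ℝ} (ha : 0 < a) :
    theta (-1) (exp (-π * a)) =
      1 / √a * (exp (-π / (4 * a)) * theta (exp (-π / a))⁻¹ (exp (-π / a))) := by
  have poisson := Complex.tsum_exp_neg_quadratic (a := a) (by simpa using ha) (Complex.I / 2)
  have sqrt_cast : (a : ℂ) ^ (1 / 2 : ℂ) = (√a : ℝ) := by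
    rw [sqrt_eq_rpow, Complex.ofReal_cpow ha.le]
    norm_num
  simp only [cexp_neg_quadratic_add_eq_theta_term, cexp_neg_quadratic_shift_eq_theta_term,
    sqrt_cast, ← Complex.ofReal_tsum, tsum_mul_left] at poisson
  exact_mod_cast poisson

lemma norm_exp_neg_pi_div_sqrt_two_lt_one : ‖exp (-π / √2)‖ < 1 := by
  rw [norm_of_nonneg (exp_pos _).le, exp_lt_one_iff]
  exact div_neg_of_neg_of_pos (neg_neg_of_pos pi_pos) (by positivity)

lemma theta_neg_one_sq_exp_neg_pi_div_sqrt_two {q : ℝ} (hq : q = exp (-π / √2)) :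
    theta (-1) q ^ 2 = √2 * (q * theta (q ^ 2)⁻¹ (q ^ 2) ^ 2) := by
  have hsq : √2 ^ 2 = 2 := sq_sqrt zero_le_two
  have nome : exp (-π * (1 / √2)) = q := by rw [hq, mul_one_div]
  have dual_nome : exp (-π / (1 / √2)) = q ^ 2 := by
    rw [hq, ← exp_nat_mul]
    congr 1
    field_simp
    simp [hsq]
  have prefactor : exp (-π / (4 * (1 / √2))) ^ 2 = q := by
    rw [hq, ← exp_nat_mul]
    congr 1
    field_simp
    norm_num [hsq]
  have poisson := theta_neg_one_exp_neg_pi_mul (a := 1 / √2) (by positivity)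
  rw [nome, dual_nome] at poisson
  rw [poisson, mul_pow, mul_pow, prefactor, div_pow, sq_sqrt (by positivity)]
  field_simp

theorem V4_exp_neg_pi_div_sqrt_two : V4 (exp (-π / √2)) = 1 / √32 := by
  have hq₁ := norm_exp_neg_pi_div_sqrt_two_lt_one
  have hsq := theta_neg_one_sq_exp_neg_pi_div_sqrt_two rfl
  have hne := right_ne_zero_of_mul (hsq ▸ pow_ne_zero 2 (theta_neg_one_ne_zero hq₁))
  have sqrt_thirty_two : √32 = 4 * √2 := by
    rw [show (32 : ℝ) = 4 ^ 2 * 2 by norm_num, sqrt_mul (by positivity), sqrt_sq (by positivity)]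
  rw [V4_eq_theta_inv_sq_div (exp_ne_zero _) hq₁, hsq, sqrt_thirty_two, ← mul_assoc 4,
    div_mul_cancel_right₀ hne, one_div]

end SpecialValue

theorem stmt_4_general :
    (∀ q : ℝ, |q| < 1 → (∫ t in (0:ℝ)..q, U4 t) = V4 q) ∧
    V4 (Real.exp (-Real.pi / Real.sqrt 2)) = 1 / Real.sqrt 32 :=
  ⟨fun _ ↦ integral_U4, V4_exp_neg_pi_div_sqrt_two⟩

theorem stmt_4 :
    (∀ q : ℝ, 0 < q → q < 1 → (∫ t in (0:ℝ)..q, U4 t) = V4 q) ∧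
    V4 (Real.exp (-Real.pi / Real.sqrt 2)) = 1 / Real.sqrt 32 :=
  ⟨fun q hq₀ hq₁ ↦ stmt_4_general.1 q (abs_lt.2 ⟨neg_one_lt_zero.trans hq₀, hq₁⟩),
    stmt_4_general.2⟩
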